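/- The preferred well-founded semantics approximates preferred answer set semantics: let (X,Y) be the preferred well-founded model of an ordered logic program (Π,<) and let Z be any preferred answer set of (Π,<) (i.e., C_{(Π,<)}(Z)=Z). Then X ⊆ Z and Y ⊆ Lit∖Z. -/

import Mathlib

open scoped Classical

/-- A literal: an atom `A` or its classical negation `¬A`. -/
inductive Lit (α : Type) : Type
  | pos : α → Lit α
  | neg : α → Lit α

/-- A rule with a head literal and finite positive and negative bodies. -/
structure Rule (α : Type) where
  head : Lit α
  pbody : Finset (Lit α)
  nbody : Finset (Lit α)

/-- A program is a set of rules (finiteness is stated as a hypothesis). -/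
abbrev Program (α : Type) := Set (Rule α)

/-- `X` is consistent if it contains no complementary pair. -/
def Consistent {α : Type} (X : Set (Lit α)) : Prop :=
  ¬ ∃ A : α, Lit.pos A ∈ X ∧ Lit.neg A ∈ X

/-- `X` is logically closed if it is consistent or equals the set of all literals. -/
def LogClosed {α : Type} (X : Set (Lit α)) : Prop :=
  Consistent X ∨ X = Set.univ

/-- `X` is closed under (basic) program `P`. -/
def ClosedUnder {α : Type} (P : Program α) (X : Set (Lit α)) : Prop :=
  ∀ r ∈ P, ↑r.pbody ⊆ X → r.head ∈ X

/-- `Cn P` : the smallest logically closed set closed under basic program `P`. -/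
def Cn {α : Type} (P : Program α) : Set (Lit α) :=
  ⋂₀ {X | LogClosed X ∧ ClosedUnder P X}

/-- The reduct of `P` relative to `X`. -/
def reduct {α : Type} (P : Program α) (X : Set (Lit α)) : Program α :=
  {s | ∃ r ∈ P, (↑r.nbody ∩ X = (∅ : Set (Lit α))) ∧ s = ⟨r.head, r.pbody, ∅⟩}

/-- A program is basic if all its rules have empty negative body. -/
def IsBasic {α : Type} (P : Program α) : Prop := ∀ r ∈ P, r.nbody = ∅

/-- `C_Π(X) = Cn(Π^X)`. -/
noncomputable def Cop {α : Type} (P : Program α) (X : Set (Lit α)) : Set (Lit α) :=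
  Cn (reduct P X)

/-- `A_Π(X) = C_Π(C_Π(X))`. -/
noncomputable def Aop {α : Type} (P : Program α) (X : Set (Lit α)) : Set (Lit α) :=
  Cop P (Cop P X)

/-- `X` is an answer set of `P` iff `Cn(P^X) = X`. -/
def AnswerSet {α : Type} (P : Program α) (X : Set (Lit α)) : Prop :=
  Cn (reduct P X) = X

/-- Immediate consequence operator for a basic program. -/
noncomputable def T {α : Type} (P : Program α) (X : Set (Lit α)) : Set (Lit α) :=
  if Consistent X then {L | ∃ r ∈ P, ↑r.pbody ⊆ X ∧ L = r.head} else Set.univ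

/-- `r` is active wrt `(X, Y)`. -/
def Active {α : Type} (r : Rule α) (X Y : Set (Lit α)) : Prop :=
  ↑r.pbody ⊆ X ∧ ↑r.nbody ∩ Y = (∅ : Set (Lit α))

/-- Extended immediate consequence operator `T_{Π,Y}(X)`. -/
noncomputable def TE {α : Type} (P : Program α) (Y X : Set (Lit α)) : Set (Lit α) :=
  if Consistent X then {L | ∃ r ∈ P, Active r X Y ∧ L = r.head} else Set.univ

/-- Preference-sensitive operator `T_{(Π,<),Y}(X)` (Definition 1). -/
noncomputable def TP {α : Type} (P : Program α) (lt : Rule α → Rule α → Prop)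
    (Y X : Set (Lit α)) : Set (Lit α) :=
  if Consistent X then
    {L | ∃ r ∈ P, Active r X Y ∧
      (¬ ∃ r' ∈ P, lt r r' ∧ Active r' Y X ∧ r'.head ∉ X) ∧ L = r.head}
  else Set.univ

/-- `C_{(Π,<)}(X)` (Definition 2). -/
noncomputable def CP {α : Type} (P : Program α) (lt : Rule α → Rule α → Prop)
    (X : Set (Lit α)) : Set (Lit α) :=
  ⋃ i : ℕ, (TP P lt X)^[i] ∅

/-- `A_{(Π,<)}(X) = C_{(Π,<)}(C_{(Π,<)}(X))`. -/
noncomputable def AP {α : Type} (P : Program α) (lt : Rule α → Rule α → Prop)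
    (X : Set (Lit α)) : Set (Lit α) :=
  CP P lt (CP P lt X)

/-- The set `D^r_{(X,Y)}` of removable literals. -/
def D {α : Type} (P : Program α) (lt : Rule α → Rule α → Prop) (r : Rule α)
    (X Y : Set (Lit α)) : Set (Lit α) :=
  {L | ∀ r' ∈ P, r'.head = L → ↑r'.pbody ⊆ Y →
      lt r' r ∧ ({r.head} ∪ X) ∩ ↑r'.nbody ≠ (∅ : Set (Lit α))}

/-- `T°_{(Π,<),Y}(X)` (Definition 3). -/
noncomputable def TN {α : Type} (P : Program α) (lt : Rule α → Rule α → Prop)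
    (Y X : Set (Lit α)) : Set (Lit α) :=
  if Consistent X then
    {L | ∃ r ∈ P, Active r X (Y \ D P lt r X Y) ∧ L = r.head}
  else Set.univ

/-- `C°_{(Π,<)}(X)` (Definition 4). -/
noncomputable def CN {α : Type} (P : Program α) (lt : Rule α → Rule α → Prop)
    (X : Set (Lit α)) : Set (Lit α) :=
  ⋃ i : ℕ, (TN P lt X)^[i] ∅

/-- `A°_{(Π,<)}(X) = C°_{(Π,<)}(C_Π(X))`. -/
noncomputable def AN {α : Type} (P : Program α) (lt : Rule α → Rule α → Prop)
    (X : Set (Lit α)) : Set (Lit α) :=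
  CN P lt (Cop P X)

theorem cons_mono {α : Type} {X Y : Set (Lit α)} (h : X ⊆ Y) (hY : Consistent Y) :
    Consistent X := fun ⟨A, h1, h2⟩ => hY ⟨A, h h1, h h2⟩

theorem Cop_anti {α : Type} (P : Program α) {X Y : Set (Lit α)} (h : X ⊆ Y) :
    Cop P Y ⊆ Cop P X := by
  intro L hL W hW
  apply hL W
  refine ⟨hW.1, ?_⟩
  rintro s ⟨r, hr, hn, rfl⟩ hp
  refine hW.2 _ ⟨r, hr, ?_, rfl⟩ hp
  exact Set.subset_eq_empty (Set.inter_subset_inter_right _ h) hn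

theorem D_mono {α : Type} (P : Program α) (lt : Rule α → Rule α → Prop) (r : Rule α)
    {X X' Y Y' : Set (Lit α)} (hX : X ⊆ X') (hY : Y' ⊆ Y) :
    D P lt r X Y ⊆ D P lt r X' Y' := by
  intro L hL r' hr' hh hp
  obtain ⟨h1, h2⟩ := hL r' hr' hh (hp.trans hY)
  refine ⟨h1, fun h => h2 ?_⟩
  exact Set.subset_eq_empty
    (Set.inter_subset_inter_left _ (Set.union_subset_union_right _ hX)) h

theorem TN_mono {α : Type} (P : Program α) (lt : Rule α → Rule α → Prop)
    {X X' Y Y' : Set (Lit α)} (hX : X ⊆ X') (hY : Y' ⊆ Y) :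
    TN P lt Y X ⊆ TN P lt Y' X' := by
  unfold TN
  by_cases hc : Consistent X'
  · rw [if_pos hc, if_pos (cons_mono hX hc)]
    rintro L ⟨r, hr, ⟨h1, h2⟩, rfl⟩
    refine ⟨r, hr, ⟨h1.trans hX, ?_⟩, rfl⟩
    refine Set.subset_eq_empty (Set.inter_subset_inter_right _ ?_) h2
    exact Set.diff_subset_diff hY (D_mono P lt r hX hY)
  · rw [if_neg hc]
    exact Set.subset_univ _

theorem CN_anti {α : Type} (P : Program α) (lt : Rule α → Rule α → Prop)
    {Y Y' : Set (Lit α)} (hY : Y' ⊆ Y) : CN P lt Y ⊆ CN P lt Y' := by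
  apply Set.iUnion_mono
  intro i
  induction i with
  | zero => exact subset_rfl
  | succ n ih =>
    rw [Function.iterate_succ_apply', Function.iterate_succ_apply']
    exact TN_mono P lt ih hY

theorem TP_pos {α : Type} (P : Program α) (lt : Rule α → Rule α → Prop)
    (Y : Set (Lit α)) {X : Set (Lit α)} (hc : Consistent X) :
    TP P lt Y X = {L | ∃ r ∈ P, Active r X Y ∧
      (¬ ∃ r' ∈ P, lt r r' ∧ Active r' Y X ∧ r'.head ∉ X) ∧ L = r.head} := by
  unfold TP
  rw [if_pos hc]

theorem TP_mono {α : Type} (P : Program α) (lt : Rule α → Rule α → Prop)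
    (Y : Set (Lit α)) : Monotone (TP P lt Y) := by
  intro X X' hX
  change TP P lt Y X ⊆ TP P lt Y X'
  unfold TP
  by_cases hc : Consistent X'
  · rw [if_pos hc, if_pos (cons_mono hX hc)]
    rintro L ⟨r, hr, ⟨h1, h2⟩, h3, rfl⟩
    refine ⟨r, hr, ⟨h1.trans hX, h2⟩, ?_, rfl⟩
    rintro ⟨r', hr', hlt, ⟨ha, hb⟩, hh⟩
    exact h3 ⟨r', hr', hlt, ⟨ha, Set.subset_eq_empty (Set.inter_subset_inter_right _ hX) hb⟩,
      fun h => hh (hX h)⟩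
  · rw [if_neg hc]
    exact Set.subset_univ _

theorem TP_chain {α : Type} (P : Program α) (lt : Rule α → Rule α → Prop)
    (Y : Set (Lit α)) : Monotone (fun i : ℕ => (TP P lt Y)^[i] ∅) := by
  apply monotone_nat_of_le_succ
  intro n
  induction n with
  | zero => exact Set.empty_subset _
  | succ n ih =>
    rw [Function.iterate_succ_apply', Function.iterate_succ_apply' (n := n + 1)]
    exact TP_mono P lt Y ih

theorem chain_stage {α : Type} {f : ℕ → Set α} (hf : Monotone f) {Z : Set α}
    (hfin : Z.Finite) (hZ : Z ⊆ ⋃ i, f i) : ∃ i, Z ⊆ f i := by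
  induction Z, hfin using Set.Finite.induction_on with
  | empty => exact ⟨0, Set.empty_subset _⟩
  | insert _ _ ih =>
    rw [Set.insert_subset_iff] at hZ
    obtain ⟨i, hi⟩ := ih hZ.2
    obtain ⟨j, hj⟩ := Set.mem_iUnion.1 hZ.1
    refine ⟨max i j, Set.insert_subset_iff.2 ⟨hf (le_max_right i j) hj, ?_⟩⟩
    exact hi.trans (hf (le_max_left i j))

theorem CP_sub_Cop {α : Type} (P : Program α) (lt : Rule α → Rule α → Prop)
    (Z : Set (Lit α)) : CP P lt Z ⊆ Cop P Z := by
  apply Set.iUnion_subset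
  intro i
  apply Set.subset_sInter
  rintro W ⟨hl, hcl⟩
  rcases hl with hl | rfl
  swap
  · exact Set.subset_univ _
  induction i with
  | zero => exact Set.empty_subset _
  | succ n ih =>
    rw [Function.iterate_succ_apply']
    rw [TP_pos P lt Z (cons_mono ih hl)]
    rintro L ⟨r, hr, ⟨h1, h2⟩, -, rfl⟩
    exact hcl ⟨r.head, r.pbody, ∅⟩ ⟨r, hr, h2, rfl⟩ (h1.trans ih)

/-- A preferred answer set is all literals or consistent. -/
theorem CP_logClosed {α : Type} (P : Program α) (lt : Rule α → Rule α → Prop)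
    (Z : Set (Lit α)) (hZ : CP P lt Z = Z) : LogClosed Z := by
  by_cases hc : Consistent Z
  · exact Or.inl hc
  right
  have hc' := hc
  unfold Consistent at hc'
  push Not at hc'
  obtain ⟨A, h1, h2⟩ := hc'
  obtain ⟨i, hi⟩ := chain_stage (TP_chain P lt Z)
    (Z := {Lit.pos A, Lit.neg A}) (by simp) (by
      change _ ⊆ CP P lt Z
      rw [hZ]
      rintro L (rfl | rfl)
      exacts [h1, h2])
  apply Set.eq_univ_of_univ_subset
  have h3 : (TP P lt Z)^[i + 1] ∅ = Set.univ := by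
    rw [Function.iterate_succ_apply']
    unfold TP
    rw [if_neg]
    exact fun h => h ⟨A, hi (by simp), hi (by simp)⟩
  rw [← h3]
  refine (Set.subset_iUnion (fun i => (TP P lt Z)^[i] ∅) (i + 1)).trans ?_
  exact hZ.subset

theorem stage_sub {α : Type} {P : Program α} {lt : Rule α → Rule α → Prop}
    {Z : Set (Lit α)} (hZ : CP P lt Z = Z) (i : ℕ) : (TP P lt Z)^[i] ∅ ⊆ Z :=
  (Set.subset_iUnion (fun i => (TP P lt Z)^[i] ∅) i).trans hZ.subset

/-- In the consistent case every literal has a first stage and a rule producing it. -/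
theorem stage_rule {α : Type} {P : Program α} {lt : Rule α → Rule α → Prop}
    {Z : Set (Lit α)} (hZ : CP P lt Z = Z) (hc : Consistent Z) {i : ℕ} {L : Lit α}
    (h : L ∈ (TP P lt Z)^[i + 1] ∅) :
    ∃ r ∈ P, Active r ((TP P lt Z)^[i] ∅) Z ∧
      (¬ ∃ r' ∈ P, lt r r' ∧ Active r' Z ((TP P lt Z)^[i] ∅) ∧
        r'.head ∉ (TP P lt Z)^[i] ∅) ∧ L = r.head := by
  rw [Function.iterate_succ_apply'] at h
  rw [TP_pos P lt Z (cons_mono (stage_sub hZ i) hc)] at h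
  exact h

theorem exists_succ_stage {α : Type} {P : Program α} {lt : Rule α → Rule α → Prop}
    {Z : Set (Lit α)} (hZ : CP P lt Z = Z) {L : Lit α} (hL : L ∈ Z) :
    ∃ i, L ∈ (TP P lt Z)^[i + 1] ∅ := by
  rw [← hZ] at hL
  obtain ⟨i, hi⟩ := Set.mem_iUnion.1 hL
  exact ⟨i, TP_chain P lt Z (Nat.le_succ i) hi⟩

theorem CP_closed {α : Type} (P : Program α) (hfin : P.Finite)
    (lt : Rule α → Rule α → Prop)
    (hirr : ∀ r, ¬ lt r r) (htrans : ∀ r₁ r₂ r₃, lt r₁ r₂ → lt r₂ r₃ → lt r₁ r₃)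
    (Z : Set (Lit α)) (hZ : CP P lt Z = Z) (hc : Consistent Z) :
    ∀ r ∈ P, Active r Z Z → r.head ∈ Z := by
  have hZf : Z.Finite := by
    refine (hfin.image Rule.head).subset fun L hL => ?_
    obtain ⟨i, hi⟩ := exists_succ_stage hZ hL
    obtain ⟨r, hr, -, -, rfl⟩ := stage_rule hZ hc hi
    exact ⟨r, hr, rfl⟩
  obtain ⟨i, hi⟩ := chain_stage (TP_chain P lt Z) hZf hZ.symm.subset
  have hi : (TP P lt Z)^[i] ∅ = Z := (stage_sub hZ i).antisymm hi
  by_contra hcon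
  push Not at hcon
  obtain ⟨r0, hr0, ha0, hh0⟩ := hcon
  have hwf : P.WellFoundedOn (fun a b => lt b a) := by
    haveI : IsStrictOrder (Rule α) (fun a b => lt b a) :=
      { irrefl := hirr, trans := fun a b c h1 h2 => htrans _ _ _ h2 h1 }
    exact hfin.wellFoundedOn
  have hwf' := hwf.subset (s := {r ∈ P | Active r Z Z ∧ r.head ∉ Z}) (fun r h => h.1)
  obtain ⟨⟨m, hm, hma, hmh⟩, -, hmin⟩ :=
    WellFounded.has_min hwf' Set.univ ⟨⟨r0, hr0, ha0, hh0⟩, trivial⟩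
  apply hmh
  apply stage_sub hZ (i + 1)
  rw [Function.iterate_succ_apply', hi]
  unfold TP
  rw [if_pos hc]
  refine ⟨m, hm, hma, ?_, rfl⟩
  rintro ⟨r', hr', hlt, ha, hh⟩
  exact hmin ⟨r', hr', ha, hh⟩ trivial hlt

theorem Cop_eq {α : Type} (P : Program α) (hfin : P.Finite)
    (lt : Rule α → Rule α → Prop)
    (hirr : ∀ r, ¬ lt r r) (htrans : ∀ r₁ r₂ r₃, lt r₁ r₂ → lt r₂ r₃ → lt r₁ r₃)
    (Z : Set (Lit α)) (hZ : CP P lt Z = Z) : Cop P Z = Z := by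
  apply Set.Subset.antisymm
  · apply Set.sInter_subset_of_mem
    have hl := CP_logClosed P lt Z hZ
    refine ⟨hl, ?_⟩
    rcases hl with hc | hu
    · rintro s ⟨r, hr, hn, rfl⟩ hp
      exact CP_closed P hfin lt hirr htrans Z hZ hc r hr ⟨hp, hn⟩
    · intro s _ _
      rw [hu]
      trivial
  · have := CP_sub_Cop P lt Z
    rwa [hZ] at this

theorem CN_sub {α : Type} (P : Program α) (hfin : P.Finite)
    (lt : Rule α → Rule α → Prop)
    (hirr : ∀ r, ¬ lt r r) (htrans : ∀ r₁ r₂ r₃, lt r₁ r₂ → lt r₂ r₃ → lt r₁ r₃)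
    (Z : Set (Lit α)) (hZ : CP P lt Z = Z) : CN P lt Z ⊆ Z := by
  rcases CP_logClosed P lt Z hZ with hc | hu
  swap
  · rw [hu]
    exact Set.subset_univ _
  apply Set.iUnion_subset
  intro n
  induction n with
  | zero => exact Set.empty_subset _
  | succ n ih =>
    rw [Function.iterate_succ_apply']
    generalize (TN P lt Z)^[n] ∅ = S at ih
    unfold TN
    rw [if_pos (cons_mono ih hc)]
    rintro L ⟨r, hr, ⟨h1, h2⟩, rfl⟩
    by_contra hhead
    by_cases hne : (↑r.nbody ∩ Z : Set (Lit α)) = ∅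
    · exact hhead (CP_closed P hfin lt hirr htrans Z hZ hc r hr ⟨h1.trans ih, hne⟩)
    have hex : ∃ i, ∃ L ∈ r.nbody, L ∈ (TP P lt Z)^[i + 1] ∅ := by
      obtain ⟨L, hL1, hL2⟩ := Set.nonempty_iff_ne_empty.2 hne
      obtain ⟨i, hi⟩ := exists_succ_stage hZ hL2
      exact ⟨i, L, hL1, hi⟩
    obtain ⟨L, hLn, hLi⟩ := Nat.find_spec hex
    have hmin := fun m (hm : m < Nat.find hex) => Nat.find_min hex hm
    generalize Nat.find hex = i at hLi hmin
    obtain ⟨r', hr', ⟨ha, hb⟩, hpref, rfl⟩ := stage_rule hZ hc hLi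
    have hD : r'.head ∈ D P lt r S Z := by
      by_contra hD
      have : r'.head ∈ (↑r.nbody ∩ (Z \ D P lt r S Z) : Set (Lit α)) :=
        ⟨hLn, stage_sub hZ _ hLi, hD⟩
      rw [h2] at this
      exact this
    obtain ⟨hlt, -⟩ := hD r' hr' rfl (ha.trans (stage_sub hZ i))
    apply hpref
    refine ⟨r, hr, hlt, ⟨h1.trans ih, ?_⟩, fun h => hhead (stage_sub hZ i h)⟩
    apply Set.eq_empty_of_forall_notMem
    rintro M ⟨hM1, hM2⟩
    cases i with
    | zero => exact hM2
    | succ k => exact hmin k (Nat.lt_succ_self k) ⟨M, hM1, hM2⟩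

/-- Theorem 4: the preferred well-founded model `(X,Y)`
approximates every preferred answer set `Z`: `X ⊆ Z` and `Y ⊆ Lit ∖ Z`. -/
theorem preferred_wfm_approximates_preferredAnswerSets {α : Type}
    (P : Program α) (hfin : P.Finite) (lt : Rule α → Rule α → Prop)
    (hirr : ∀ r, ¬ lt r r) (htrans : ∀ r₁ r₂ r₃, lt r₁ r₂ → lt r₂ r₃ → lt r₁ r₃)
    (X : Set (Lit α))
    (hX : AN P lt X = X ∧ ∀ Z, AN P lt Z = Z → X ⊆ Z)
    (Z : Set (Lit α)) (hZ : CP P lt Z = Z) :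
    X ⊆ Z ∧ (Set.univ \ Cop P X) ⊆ (Set.univ \ Z) := by
  have hC := Cop_eq P hfin lt hirr htrans Z hZ
  let f : Set (Lit α) →o Set (Lit α) :=
    ⟨AN P lt, fun A B h => CN_anti P lt (Cop_anti P h)⟩
  have hXZ : X ⊆ Z := by
    refine (hX.2 (OrderHom.lfp f) (OrderHom.map_lfp f)).trans ?_
    apply OrderHom.lfp_le f
    change CN P lt (Cop P Z) ⊆ Z
    rw [hC]
    exact CN_sub P hfin lt hirr htrans Z hZ
  refine ⟨hXZ, Set.diff_subset_diff_right ?_⟩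
  have := Cop_anti P hXZ
  rwa [hC] at this
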